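/- Under hypotheses (H0)–(H3), with n₀ ≥ 2 fixed so that c²γ^{n₀} < 1, for every i ∈ {1,…,n₀} one has (1/n) Σ_{l=1}^n Z_{i+l n₀}² → σ² P_μ-almost surely as n → ∞. -/

import Mathlib

open MeasureTheory ProbabilityTheory Filter Bornology
open scoped ENNReal NNReal Topology

variable {E : Type*} [MeasurableSpace E] [MetricSpace E] [CompleteSpace E]
  [SecondCountableTopology E] [BorelSpace E]

/-- The Markov operator acting on functions: `Pf(x) = ∫ f(y) π(x, dy)`. -/
noncomputable def Pfun (π : Kernel E E) (f : E → ℝ) : E → ℝ := fun x => ∫ y, f y ∂(π x)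

/-- The Markov operator acting on measures (the transfer operator `ν ↦ νP`). -/
noncomputable def Pmeas (π : Kernel E E) (ν : MeasureTheory.Measure E) :
    MeasureTheory.Measure E := ν.bind (fun x => π x)

/-- `ν ∈ M_{1,1}`: a Borel probability measure with finite first moment. -/
def FiniteFirstMoment (ν : MeasureTheory.Measure E) : Prop :=
  IsProbabilityMeasure ν ∧ ∃ x₀ : E, Integrable (fun x => dist x₀ x) ν

/-- The Wasserstein (dual-Lipschitz) distance between two measures. -/
noncomputable def wassDist (ν₁ ν₂ : MeasureTheory.Measure E) : ℝ :=
  sSup {r : ℝ | ∃ f : E → ℝ, LipschitzWith 1 f ∧ r = |∫ x, f x ∂ν₁ - ∫ x, f x ∂ν₂|}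

/-- The natural filtration of the coordinate process on `ℕ → E`. -/
def natFilt : Filtration ℕ (MeasurableSpace.pi : MeasurableSpace (ℕ → E)) :=
  Filtration.natural (fun k (ω : ℕ → E) => ω k)
    (fun k => (measurable_pi_apply k).stronglyMeasurable)

/-- `ℙ` is the law of the Markov chain on `E^ℕ` with transition probability `π` and
initial distribution `ν`. -/
structure IsMarkovChainLaw (π : Kernel E E) (ν : MeasureTheory.Measure E)
    (P : MeasureTheory.Measure (ℕ → E)) : Prop where
  prob : IsProbabilityMeasure P
  init : P.map (fun ω => ω 0) = ν
  markov : ∀ (n : ℕ) (g : E → ℝ), Measurable g → IsBounded (Set.range g) →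
    P[(fun ω => g (ω (n + 1))) | natFilt n] =ᵐ[P] fun ω => ∫ y, g y ∂(π (ω n))

/-- The corrector function `χ = ∑_{i≥0} Pⁱψ`. -/
noncomputable def chiFun (π : Kernel E E) (ψ : E → ℝ) : E → ℝ :=
  fun x => ∑' i : ℕ, (Pfun π)^[i] ψ x

/-- The martingale `S_n = χ(X_n) - χ(X_0) + ∑_{i=0}^n ψ(X_i)` as a function of the trajectory. -/
noncomputable def SFun (π : Kernel E E) (ψ : E → ℝ) (n : ℕ) : (ℕ → E) → ℝ :=
  fun ω => chiFun π ψ (ω n) - chiFun π ψ (ω 0) + ∑ i ∈ Finset.range (n + 1), ψ (ω i)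

/-- The martingale differences `Z_n = χ(X_n) - χ(X_{n-1}) + ψ(X_n)`. -/
noncomputable def ZFun (π : Kernel E E) (ψ : E → ℝ) (n : ℕ) : (ℕ → E) → ℝ :=
  fun ω => chiFun π ψ (ω n) - chiFun π ψ (ω (n - 1)) + ψ (ω n)


set_option linter.unusedSectionVars false

lemma ffm_dist {ν : Measure E} (h : FiniteFirstMoment ν) (x : E) :
    Integrable (fun y => dist x y) ν := by
  obtain ⟨hp, z, hz⟩ := h
  refine Integrable.mono' (hz.add (integrable_const (dist x z))) (by fun_prop) ?_
  refine Eventually.of_forall fun y => ?_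
  rw [Real.norm_of_nonneg dist_nonneg]
  have := dist_triangle x z y
  simp only [Pi.add_apply]; linarith

lemma ffm_lip {ν : Measure E} (h : FiniteFirstMoment ν) {K : ℝ≥0} {f : E → ℝ}
    (hf : LipschitzWith K f) : Integrable f ν := by
  obtain ⟨hp, z, hz⟩ := id h
  refine Integrable.mono' ((hz.const_mul K).add (integrable_const (|f z|)))
    (hf.continuous.aestronglyMeasurable) ?_
  refine Eventually.of_forall fun y => ?_
  have h1 := hf.dist_le_mul y z
  rw [Real.dist_eq, dist_comm] at h1
  have := abs_sub_abs_le_abs_sub (f y) (f z)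
  simp only [Pi.add_apply, Real.norm_eq_abs]; linarith

lemma lip_int_diff {ν₁ ν₂ : Measure E} (h1 : FiniteFirstMoment ν₁) (h2 : FiniteFirstMoment ν₂)
    {f : E → ℝ} {K : ℝ≥0} (hf : LipschitzWith K f) (z : E) :
    |∫ x, f x ∂ν₁ - ∫ x, f x ∂ν₂| ≤ K * (∫ x, dist z x ∂ν₁ + ∫ x, dist z x ∂ν₂) := by
  have hp1 := h1.1
  have hp2 := h2.1
  have key : ∀ ν : Measure E, FiniteFirstMoment ν →
      |∫ x, f x ∂ν - f z| ≤ K * ∫ x, dist z x ∂ν := by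
    intro ν h
    have := h.1
    have e : ∫ x, f x ∂ν - f z = ∫ x, (f x - f z) ∂ν := by
      rw [integral_sub (ffm_lip h hf) (integrable_const _)]; simp
    rw [e, ← integral_const_mul]
    refine (abs_integral_le_integral_abs).trans ?_
    refine integral_mono ((ffm_lip h hf).sub (integrable_const _)).abs
      ((ffm_dist h z).const_mul _) fun x => ?_
    have h1 := hf.dist_le_mul x z
    rw [Real.dist_eq, dist_comm] at h1
    exact h1
  have a := key ν₁ h1
  have b := key ν₂ h2
  rw [abs_le] at a b ⊢
  constructor <;> nlinarith

lemma lip_wass {ν₁ ν₂ : Measure E} (h1 : FiniteFirstMoment ν₁) (h2 : FiniteFirstMoment ν₂)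
    {f : E → ℝ} {K : ℝ≥0} (hf : LipschitzWith K f) :
    |∫ x, f x ∂ν₁ - ∫ x, f x ∂ν₂| ≤ K * wassDist ν₁ ν₂ := by
  have hp1 := h1.1
  have hp2 := h2.1
  obtain ⟨z, -⟩ := h1.2
  rcases eq_or_ne K 0 with rfl | hK
  · have : ∀ x, f x = f z := fun x => by
      have := hf.dist_le_mul x z
      simpa using this
    simp [this]
  have hKpos : (0 : ℝ) < K := by positivity
  have hg : LipschitzWith 1 (fun x => (K : ℝ)⁻¹ * f x) := by
    refine LipschitzWith.of_dist_le_mul fun x y => ?_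
    have := hf.dist_le_mul x y
    rw [Real.dist_eq] at this ⊢
    rw [← mul_sub, abs_mul, abs_of_pos (inv_pos.2 hKpos), inv_mul_le_iff₀ hKpos]
    simpa using this
  have hle : |∫ x, (K : ℝ)⁻¹ * f x ∂ν₁ - ∫ x, (K : ℝ)⁻¹ * f x ∂ν₂| ≤ wassDist ν₁ ν₂ := by
    refine le_csSup ⟨∫ x, dist z x ∂ν₁ + ∫ x, dist z x ∂ν₂, ?_⟩ ⟨_, hg, rfl⟩
    rintro r ⟨u, hu, rfl⟩
    simpa using lip_int_diff h1 h2 hu z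
  rw [integral_const_mul, integral_const_mul, ← mul_sub, abs_mul,
    abs_of_pos (inv_pos.2 hKpos), inv_mul_le_iff₀ hKpos] at hle
  exact hle

lemma ffm_dirac (x : E) : FiniteFirstMoment (Measure.dirac x) := by
  refine ⟨inferInstance, x, ?_⟩
  exact integrable_dirac (by simp)

lemma wass_dirac_le {ν : Measure E} (h : FiniteFirstMoment ν) (x : E) :
    wassDist (Measure.dirac x) ν ≤ ∫ y, dist x y ∂ν := by
  refine csSup_le ⟨_, fun _ => 0, LipschitzWith.const' 0 |>.weaken zero_le_one, rfl⟩ ?_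
  rintro r ⟨f, hf, rfl⟩
  have := lip_int_diff (ffm_dirac x) h hf x
  simpa using this

lemma pmeas_dirac (π : Kernel E E) (x : E) : Pmeas π (Measure.dirac x) = π x := by
  unfold Pmeas
  exact Measure.dirac_bind π.measurable x

section
variable {π : Kernel E E} [IsMarkovKernel π] {γ c : ℝ}

lemma ffm_iter (hH1 : ∀ ν : Measure E, FiniteFirstMoment ν → FiniteFirstMoment (Pmeas π ν))
    {ν : Measure E} (h : FiniteFirstMoment ν) (n : ℕ) :
    FiniteFirstMoment ((Pmeas π)^[n] ν) := by
  induction n with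
  | zero => exact h
  | succ n ih => rw [Function.iterate_succ_apply']; exact hH1 _ ih

lemma pfun_lip1 (hγ : γ ∈ Set.Ioo (0 : ℝ) 1) (hc : 0 < c)
    (hH1 : ∀ ν : Measure E, FiniteFirstMoment ν → FiniteFirstMoment (Pmeas π ν))
    (hH2 : ∀ n : ℕ, 1 ≤ n → ∀ ν₁ ν₂ : Measure E, FiniteFirstMoment ν₁ → FiniteFirstMoment ν₂ →
      wassDist ((Pmeas π)^[n] ν₁) ((Pmeas π)^[n] ν₂) ≤ c * γ ^ n * wassDist ν₁ ν₂)
    {f : E → ℝ} {K : ℝ≥0} (hf : LipschitzWith K f) (x y : E) :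
    |Pfun π f x - Pfun π f y| ≤ K * (c * dist x y) := by
  have h1 := lip_wass (hH1 _ (ffm_dirac x)) (hH1 _ (ffm_dirac y)) hf
  have h2 := hH2 1 le_rfl _ _ (ffm_dirac x) (ffm_dirac y)
  have h3 := wass_dirac_le (ffm_dirac y) x
  rw [integral_dirac] at h3
  simp only [Function.iterate_one, pow_one] at h2
  simp only [pmeas_dirac] at h1 h2
  refine h1.trans (mul_le_mul_of_nonneg_left (h2.trans ?_) K.2)
  have : c * γ * wassDist (Measure.dirac x) (Measure.dirac y) ≤ c * γ * dist x y :=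
    mul_le_mul_of_nonneg_left h3 (mul_pos hc hγ.1).le
  refine this.trans ?_
  have hd : 0 ≤ c * dist x y := by positivity
  nlinarith [hγ.2]

lemma pfun_lip (hγ : γ ∈ Set.Ioo (0 : ℝ) 1) (hc : 0 < c)
    (hH1 : ∀ ν : Measure E, FiniteFirstMoment ν → FiniteFirstMoment (Pmeas π ν))
    (hH2 : ∀ n : ℕ, 1 ≤ n → ∀ ν₁ ν₂ : Measure E, FiniteFirstMoment ν₁ → FiniteFirstMoment ν₂ →
      wassDist ((Pmeas π)^[n] ν₁) ((Pmeas π)^[n] ν₂) ≤ c * γ ^ n * wassDist ν₁ ν₂)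
    {f : E → ℝ} {K : ℝ≥0} (hf : LipschitzWith K f) (n : ℕ) :
    ∃ K', LipschitzWith K' ((Pfun π)^[n] f) := by
  induction n with
  | zero => exact ⟨K, hf⟩
  | succ n ih =>
    obtain ⟨K', h⟩ := ih
    refine ⟨K' * c.toNNReal, LipschitzWith.of_dist_le_mul fun x y => ?_⟩
    rw [Function.iterate_succ_apply', Real.dist_eq]
    have := pfun_lip1 hγ hc hH1 hH2 h x y
    simp only [NNReal.coe_mul, Real.coe_toNNReal _ hc.le, mul_assoc]
    exact this

lemma integral_pmeas {ν : Measure E} {f : E → ℝ} (hf : Integrable f (Pmeas π ν)) :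
    ∫ x, f x ∂(Pmeas π ν) = ∫ x, Pfun π f x ∂ν := by
  have e : Pmeas π ν = (π ∘ₖ Kernel.const Unit ν) () := by
    rw [Kernel.comp_apply]; rfl
  rw [e] at hf ⊢
  rw [Kernel.integral_comp hf]
  rfl

lemma integral_iter (hγ : γ ∈ Set.Ioo (0 : ℝ) 1) (hc : 0 < c)
    (hH1 : ∀ ν : Measure E, FiniteFirstMoment ν → FiniteFirstMoment (Pmeas π ν))
    (hH2 : ∀ n : ℕ, 1 ≤ n → ∀ ν₁ ν₂ : Measure E, FiniteFirstMoment ν₁ → FiniteFirstMoment ν₂ →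
      wassDist ((Pmeas π)^[n] ν₁) ((Pmeas π)^[n] ν₂) ≤ c * γ ^ n * wassDist ν₁ ν₂)
    {f : E → ℝ} {K : ℝ≥0} (hf : LipschitzWith K f) (n : ℕ) :
    ∀ {ν : Measure E}, FiniteFirstMoment ν →
      ∫ x, f x ∂((Pmeas π)^[n] ν) = ∫ x, (Pfun π)^[n] f x ∂ν := by
  induction n with
  | zero => intro ν _; rfl
  | succ n ih =>
    intro ν h
    obtain ⟨K', h'⟩ := pfun_lip hγ hc hH1 hH2 hf n
    rw [Function.iterate_succ_apply, ih (hH1 _ h), integral_pmeas (ffm_lip (hH1 _ h) h')]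
    simp only [Function.iterate_succ_apply']

lemma iter_diff (hγ : γ ∈ Set.Ioo (0 : ℝ) 1) (hc : 0 < c)
    (hH1 : ∀ ν : Measure E, FiniteFirstMoment ν → FiniteFirstMoment (Pmeas π ν))
    (hH2 : ∀ n : ℕ, 1 ≤ n → ∀ ν₁ ν₂ : Measure E, FiniteFirstMoment ν₁ → FiniteFirstMoment ν₂ →
      wassDist ((Pmeas π)^[n] ν₁) ((Pmeas π)^[n] ν₂) ≤ c * γ ^ n * wassDist ν₁ ν₂)
    {f : E → ℝ} {K : ℝ≥0} (hf : LipschitzWith K f) (n : ℕ) {ν : Measure E}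
    (h : FiniteFirstMoment ν) (x : E) :
    |(Pfun π)^[n] f x - ∫ y, f y ∂((Pmeas π)^[n] ν)| ≤
      K * ((c + 1) * γ ^ n * ∫ y, dist x y ∂ν) := by
  have e : (Pfun π)^[n] f x = ∫ y, f y ∂((Pmeas π)^[n] (Measure.dirac x)) := by
    rw [integral_iter hγ hc hH1 hH2 hf n (ffm_dirac x), integral_dirac]
  have h1 := lip_wass (ffm_iter hH1 (ffm_dirac x) n) (ffm_iter hH1 h n) hf
  have h3 := wass_dirac_le h x
  have h0 : 0 ≤ ∫ y, dist x y ∂ν := integral_nonneg fun _ => dist_nonneg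
  have hg : 0 < γ ^ n := pow_pos hγ.1 n
  rw [e]
  refine h1.trans (mul_le_mul_of_nonneg_left ?_ K.2)
  rcases Nat.eq_zero_or_pos n with rfl | hn
  · simp only [Function.iterate_zero, id, pow_zero, mul_one]
    nlinarith
  · have h2 := hH2 n hn _ _ (ffm_dirac x) h
    have : c * γ ^ n * wassDist (Measure.dirac x) ν ≤ c * γ ^ n * ∫ y, dist x y ∂ν :=
      mul_le_mul_of_nonneg_left h3 (by positivity)
    have : 0 ≤ γ ^ n * ∫ y, dist x y ∂ν := by positivity
    nlinarith

lemma pmeas_inv_iter {ν : Measure E} (hinv : Pmeas π ν = ν) (n : ℕ) :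
    (Pmeas π)^[n] ν = ν := Function.iterate_fixed hinv n

lemma chi_lip (hγ : γ ∈ Set.Ioo (0 : ℝ) 1) (hc : 0 < c)
    (hH1 : ∀ ν : Measure E, FiniteFirstMoment ν → FiniteFirstMoment (Pmeas π ν))
    (hH2 : ∀ n : ℕ, 1 ≤ n → ∀ ν₁ ν₂ : Measure E, FiniteFirstMoment ν₁ → FiniteFirstMoment ν₂ →
      wassDist ((Pmeas π)^[n] ν₁) ((Pmeas π)^[n] ν₂) ≤ c * γ ^ n * wassDist ν₁ ν₂)
    {ν : Measure E} (h : FiniteFirstMoment ν) (hinv : Pmeas π ν = ν)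
    {ψ : E → ℝ} {K : ℝ≥0} (hψ : LipschitzWith K ψ) (h0 : ∫ x, ψ x ∂ν = 0) :
    ∃ L, LipschitzWith L (chiFun π ψ) := by
  have hgeo : Summable fun n : ℕ => γ ^ n := summable_geometric_of_lt_one hγ.1.le hγ.2
  have hsum : ∀ x, Summable fun n : ℕ => (Pfun π)^[n] ψ x := fun x => by
    refine Summable.of_norm_bounded (g := fun n => (K * ((c + 1) * ∫ y, dist x y ∂ν)) * γ ^ n)
      (hgeo.mul_left _) fun n => ?_
    have := iter_diff hγ hc hH1 hH2 hψ n h x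
    rw [pmeas_inv_iter hinv, h0, sub_zero] at this
    rw [Real.norm_eq_abs]
    refine this.trans (le_of_eq (by ring))
  refine ⟨K * (c + 1).toNNReal * (∑' n : ℕ, γ ^ n).toNNReal,
    LipschitzWith.of_dist_le_mul fun x y => ?_⟩
  rw [Real.dist_eq]
  unfold chiFun
  rw [← (hsum x).tsum_sub (hsum y)]
  have hb : ∀ n : ℕ, ‖(Pfun π)^[n] ψ x - (Pfun π)^[n] ψ y‖ ≤ (K * ((c + 1) * dist x y)) * γ ^ n := by
    intro n
    have := iter_diff hγ hc hH1 hH2 hψ n (ffm_dirac y) x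
    rw [integral_iter hγ hc hH1 hH2 hψ n (ffm_dirac y), integral_dirac, integral_dirac] at this
    rw [Real.norm_eq_abs]
    refine this.trans (le_of_eq (by ring))
  have := tsum_of_norm_bounded (hgeo.mul_left (K * ((c + 1) * dist x y))).hasSum hb
  rw [Real.norm_eq_abs, tsum_mul_left] at this
  refine this.trans (le_of_eq ?_)
  simp only [NNReal.coe_mul]
  rw [Real.coe_toNNReal _ (by positivity), Real.coe_toNNReal _ (tsum_nonneg fun n => pow_nonneg hγ.1.le n)]
  ring

end

lemma adapted_coord (n : ℕ) : Measurable[natFilt (E := E) n] (fun ω : ℕ → E => ω n) :=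
  ((Filtration.stronglyAdapted_natural (u := fun k (ω : ℕ → E) => ω k)
    (fun k => (measurable_pi_apply k).stronglyMeasurable)) n).measurable

section
variable {π : Kernel E E} [IsMarkovKernel π] {ν : Measure E} {P : Measure (ℕ → E)}

lemma markov_joint (hP : IsMarkovChainLaw π ν P) {S : Type*} [MeasurableSpace S] (n : ℕ)
    (V : (ℕ → E) → S) (hV : Measurable[natFilt n] V) (u : S → E) (hu : Measurable u)
    (huV : ∀ ω, u (V ω) = ω n) :
    P.map (fun ω => (V ω, ω (n + 1))) = (P.map V) ⊗ₘ (π.comap u hu) := by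
  have := hP.prob
  have hV' : Measurable V := hV.mono (natFilt.le n) le_rfl
  have : IsProbabilityMeasure (P.map V) := Measure.isProbabilityMeasure_map hV'.aemeasurable
  have hpair : Measurable (fun ω : ℕ → E => (V ω, ω (n + 1))) :=
    hV'.prodMk (measurable_pi_apply _)
  have : IsProbabilityMeasure (P.map (fun ω => (V ω, ω (n + 1)))) :=
    Measure.isProbabilityMeasure_map hpair.aemeasurable
  refine Measure.ext_prod fun {A B} hA hB => ?_
  rw [Measure.map_apply hpair (hA.prod hB), Measure.compProd_apply_prod hA hB,
    setLIntegral_map hA (Kernel.measurable_coe _ hB) hV']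
  simp only [Kernel.comap_apply, huV]
  let g : E → ℝ := B.indicator (fun _ => 1)
  have hg : Measurable g := measurable_const.indicator hB
  have hgb : IsBounded (Set.range g) := by
    refine (Metric.isBounded_Icc (0 : ℝ) 1).subset ?_
    rintro _ ⟨x, rfl⟩
    by_cases hx : x ∈ B <;> simp [g, hx]
  have h1 := hP.markov n g hg hgb
  have hgi : Integrable (fun ω : ℕ → E => g (ω (n + 1))) P := by
    refine Integrable.of_bound (C := 1) (hg.comp (measurable_pi_apply _)).aestronglyMeasurable ?_
    refine Eventually.of_forall fun ω => ?_
    by_cases hx : ω (n + 1) ∈ B <;> simp [g, hx]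
  have hA' : MeasurableSet[natFilt n] (V ⁻¹' A) := hV hA
  have h2 := setIntegral_condExp (natFilt.le n) hgi hA'
  rw [setIntegral_congr_ae (natFilt.le n _ hA') (h1.mono fun ω h _ => h)] at h2
  have e1 : ∀ ω : ℕ → E, ∫ y, g y ∂(π (ω n)) = (π (ω n)).real B := fun ω => by
    simp only [g]; rw [integral_indicator_const _ hB]; simp
  have e2 : (fun ω : ℕ → E => g (ω (n + 1))) =
      ((fun ω : ℕ → E => ω (n + 1)) ⁻¹' B).indicator (fun _ => (1 : ℝ)) := by
    ext ω; rfl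
  have hB' : MeasurableSet ((fun ω : ℕ → E => ω (n + 1)) ⁻¹' B) := measurable_pi_apply _ hB
  simp only [e1] at h2
  rw [e2, setIntegral_indicator hB', setIntegral_const, smul_eq_mul, mul_one] at h2
  have e3 : (fun ω => (V ω, ω (n + 1))) ⁻¹' A ×ˢ B =
      V ⁻¹' A ∩ ((fun ω : ℕ → E => ω (n + 1)) ⁻¹' B) := by ext; simp
  rw [e3, ← ofReal_measureReal, ← h2, ofReal_integral_eq_lintegral_ofReal]
  · refine lintegral_congr fun ω => ?_
    rw [ofReal_measureReal]
  · refine Integrable.of_bound (C := 1) ?_ ?_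
    · exact ((Kernel.measurable_coe π hB).comp (measurable_pi_apply n)).ennreal_toReal.aestronglyMeasurable
    · exact Eventually.of_forall fun ω => by
        rw [Real.norm_of_nonneg measureReal_nonneg]; exact measureReal_le_one
  · exact Eventually.of_forall fun ω => measureReal_nonneg

/-- two-variable one-step Markov property -/
lemma markov_two (hP : IsMarkovChainLaw π ν P) (n : ℕ) (W : (ℕ → E) → ℝ)
    (hW : Measurable[natFilt n] W) {C D : ℝ} (hWC : ∀ ω, |W ω| ≤ C)
    (f : E → E → ℝ) (hf : Measurable (Function.uncurry f)) (hfD : ∀ x y, |f x y| ≤ D) :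
    ∫ ω, W ω * f (ω n) (ω (n + 1)) ∂P = ∫ ω, W ω * (∫ y, f (ω n) y ∂(π (ω n))) ∂P := by
  have := hP.prob
  let V : (ℕ → E) → ℝ × E := fun ω => (W ω, ω n)
  have hV : Measurable[natFilt n] V := hW.prodMk (adapted_coord n)
  have hV' : Measurable V := hV.mono (natFilt.le n) le_rfl
  have : IsProbabilityMeasure (P.map V) := Measure.isProbabilityMeasure_map hV'.aemeasurable
  have hj := markov_joint hP n V hV Prod.snd measurable_snd (fun ω => rfl)
  have hpair : Measurable (fun ω : ℕ → E => (V ω, ω (n + 1))) :=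
    hV'.prodMk (measurable_pi_apply _)
  let Φ : (ℝ × E) × E → ℝ := fun p => p.1.1 * f p.1.2 p.2
  have hΦ : Measurable Φ := by
    refine (measurable_fst.comp measurable_fst).mul
      (hf.comp ((measurable_snd.comp measurable_fst).prodMk measurable_snd))
  have hint : Integrable Φ (P.map (fun ω => (V ω, ω (n + 1)))) := by
    rw [integrable_map_measure hΦ.aestronglyMeasurable hpair.aemeasurable]
    refine Integrable.of_bound (C := C * D) (hΦ.comp hpair).aestronglyMeasurable ?_
    refine Eventually.of_forall fun ω => ?_
    simp only [Function.comp, Φ, V, norm_mul, Real.norm_eq_abs]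
    exact mul_le_mul (hWC ω) (hfD _ _) (abs_nonneg _) ((abs_nonneg _).trans (hWC ω))
  have e1 : ∫ ω, W ω * f (ω n) (ω (n + 1)) ∂P =
      ∫ p, Φ p ∂(P.map (fun ω => (V ω, ω (n + 1)))) := by
    rw [integral_map hpair.aemeasurable hΦ.aestronglyMeasurable]
  rw [e1, hj]
  rw [hj] at hint
  rw [Measure.integral_compProd hint, integral_map hV'.aemeasurable]
  · simp only [Φ, V, Kernel.comap_apply, integral_const_mul]
  · exact (hΦ.stronglyMeasurable.integral_kernel_prod_right').aestronglyMeasurable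

lemma pfun_meas (f : E → ℝ) (hf : Measurable f) : Measurable (Pfun π f) := by
  unfold Pfun
  exact hf.stronglyMeasurable.integral_kernel.measurable

lemma pfun_bound (f : E → ℝ) {D : ℝ} (hf : ∀ x, |f x| ≤ D) (x : E) : |Pfun π f x| ≤ D := by
  unfold Pfun
  have := norm_integral_le_of_norm_le_const (μ := π x) (f := f) (C := D)
    (Eventually.of_forall fun y => hf y)
  simpa using this

lemma markov_iter (hP : IsMarkovChainLaw π ν P) (n : ℕ) (W : (ℕ → E) → ℝ)
    (hW : Measurable[natFilt n] W) {C D : ℝ} (hWC : ∀ ω, |W ω| ≤ C) (j : ℕ) :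
    ∀ (f : E → ℝ), Measurable f → (∀ x, |f x| ≤ D) →
    ∫ ω, W ω * f (ω (n + j)) ∂P = ∫ ω, W ω * (Pfun π)^[j] f (ω n) ∂P := by
  induction j with
  | zero => intro f _ _; rfl
  | succ j ih =>
    intro f hf hfD
    have h := markov_two hP (n + j) W (hW.mono (natFilt.mono (Nat.le_add_right n j)) le_rfl) hWC
      (fun _ y => f y) (hf.comp measurable_snd) (fun _ y => hfD y)
    rw [← add_assoc, h, Function.iterate_succ_apply]
    exact ih (Pfun π f) (pfun_meas f hf) (pfun_bound f hfD)

end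

lemma sum_geo_dist {γ : ℝ} (hγ : γ ∈ Set.Ioo (0 : ℝ) 1) (s : Finset ℕ) (l : ℕ) :
    ∑ k ∈ s, γ ^ ((k - l) + (l - k)) ≤ 2 * (1 - γ)⁻¹ := by
  have hgeo : Summable fun n : ℕ => γ ^ n := summable_geometric_of_lt_one hγ.1.le hγ.2
  have hb : ∀ t : Finset ℕ, ∑ j ∈ t, γ ^ j ≤ (1 - γ)⁻¹ := fun t => by
    rw [← tsum_geometric_of_lt_one hγ.1.le hγ.2]
    exact hgeo.sum_le_tsum t fun _ _ => pow_nonneg hγ.1.le _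
  rw [← Finset.sum_filter_add_sum_filter_not s (fun k => l ≤ k)]
  have h1 : ∑ k ∈ s.filter (fun k => l ≤ k), γ ^ ((k - l) + (l - k)) ≤ (1 - γ)⁻¹ := by
    refine le_trans (le_of_eq ?_) (hb ((s.filter (fun k => l ≤ k)).image fun k => (k - l) + (l - k)))
    rw [Finset.sum_image]
    intro a ha b hb' hab
    simp only [Finset.coe_filter, Set.mem_setOf_eq] at ha hb' hab
    omega
  have h2 : ∑ k ∈ s.filter (fun k => ¬ l ≤ k), γ ^ ((k - l) + (l - k)) ≤ (1 - γ)⁻¹ := by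
    refine le_trans (le_of_eq ?_) (hb ((s.filter (fun k => ¬ l ≤ k)).image fun k => (k - l) + (l - k)))
    rw [Finset.sum_image]
    intro a ha b hb' hab
    simp only [Finset.coe_filter, Set.mem_setOf_eq] at ha hb' hab
    omega
  linarith

lemma slln_subseq {Ω : Type*} [MeasurableSpace Ω] (P : Measure Ω)
    (S T : ℕ → Ω → ℝ) (hmono : ∀ ω, Monotone fun n => S n ω) (hT : ∀ n, Measurable (T n))
    (m : ℕ → ℝ) (σ2 : ℝ) (hm : Tendsto m atTop (𝓝 σ2)) (C θ : ℝ) (hC : 0 ≤ C) (hθ : 0 < θ)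
    (h1 : ∀ N : ℕ, 1 ≤ N → P {ω | S N ω ≠ T N ω} ≤ ENNReal.ofReal (C * (N : ℝ) ^ (-θ)))
    (h2 : ∀ N : ℕ, 1 ≤ N → ∫⁻ ω, ENNReal.ofReal ((T N ω / N - m N) ^ 2) ∂P ≤
      ENNReal.ofReal (C * (N : ℝ) ^ (-θ))) :
    ∀ᵐ ω ∂P, Tendsto (fun n : ℕ => S n ω / n) atTop (𝓝 σ2) := by
  have key : ∀ α : ℝ, 1 < α → ∀ᵐ ω ∂P,
      Tendsto (fun k : ℕ => S ⌊α ^ k⌋₊ ω / (⌊α ^ k⌋₊ : ℝ)) atTop (𝓝 σ2) := by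
    intro α hα
    have hα0 : 0 < α := by linarith
    have hN1 : ∀ k : ℕ, 1 ≤ ⌊α ^ k⌋₊ := fun k => by
      rw [Nat.one_le_floor_iff]; exact one_le_pow₀ hα.le
    have hNlim : Tendsto (fun k : ℕ => ⌊α ^ k⌋₊) atTop atTop :=
      tendsto_nat_floor_atTop.comp (tendsto_pow_atTop_atTop_of_one_lt hα)
    have hbound : ∀ k : ℕ, C * (⌊α ^ k⌋₊ : ℝ) ^ (-θ) ≤ C * 2 ^ θ * (α ^ (-θ)) ^ k := by
      intro k
      have hpk : 0 < α ^ k := pow_pos hα0 k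
      have h1 : α ^ k / 2 ≤ (⌊α ^ k⌋₊ : ℝ) := by
        have a := Nat.lt_floor_add_one (α ^ k)
        have b : (1 : ℝ) ≤ ⌊α ^ k⌋₊ := by exact_mod_cast hN1 k
        linarith
      have h2 := Real.rpow_le_rpow_of_nonpos (by positivity) h1 (neg_nonpos.2 hθ.le)
      have h3 : (α ^ k / 2) ^ (-θ) = 2 ^ θ * (α ^ (-θ)) ^ k := by
        rw [Real.div_rpow hpk.le (by norm_num), Real.rpow_neg (by norm_num : (0:ℝ) ≤ 2), div_inv_eq_mul,
          mul_comm, ← Real.rpow_natCast, ← Real.rpow_mul hα0.le, ← Real.rpow_natCast,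
          ← Real.rpow_mul hα0.le, mul_comm (-θ)]
      rw [mul_assoc, ← h3]
      exact mul_le_mul_of_nonneg_left h2 hC
    have hsum : ∑' k : ℕ, ENNReal.ofReal (C * (⌊α ^ k⌋₊ : ℝ) ^ (-θ)) ≠ ∞ := by
      have hs : Summable fun k : ℕ => C * (⌊α ^ k⌋₊ : ℝ) ^ (-θ) := by
        refine Summable.of_nonneg_of_le (fun k => by positivity) hbound
          ((summable_geometric_of_lt_one (by positivity) ?_).mul_left _)
        exact Real.rpow_lt_one_of_one_lt_of_neg hα (neg_lt_zero.2 hθ)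
      exact hs.tsum_ofReal_ne_top
    have A : ∀ᵐ ω ∂P, ∀ᶠ k : ℕ in atTop, ω ∉ {ω | S ⌊α ^ k⌋₊ ω ≠ T ⌊α ^ k⌋₊ ω} := by
      refine ae_eventually_notMem ?_
      exact ne_top_of_le_ne_top hsum (ENNReal.tsum_le_tsum fun k => h1 _ (hN1 k))
    have hmeas : ∀ N, Measurable fun ω => ENNReal.ofReal ((T N ω / N - m N) ^ 2) := fun N =>
      ((((hT N).div_const _).sub_const _).pow_const 2).ennreal_ofReal
    have B : ∀ᵐ ω ∂P, ∑' k : ℕ, ENNReal.ofReal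
        ((T ⌊α ^ k⌋₊ ω / (⌊α ^ k⌋₊ : ℝ) - m ⌊α ^ k⌋₊) ^ 2) < ∞ := by
      refine ae_lt_top (Measurable.ennreal_tsum fun k => hmeas _) ?_
      rw [lintegral_tsum fun k => (hmeas _).aemeasurable]
      exact ne_top_of_le_ne_top hsum (ENNReal.tsum_le_tsum fun k => h2 _ (hN1 k))
    filter_upwards [A, B] with ω hA hB
    have l1 := ENNReal.tendsto_atTop_zero_of_tsum_ne_top hB.ne
    have l2 := (ENNReal.tendsto_toReal ENNReal.zero_ne_top).comp l1
    have l3 : Tendsto (fun k : ℕ => (T ⌊α ^ k⌋₊ ω / (⌊α ^ k⌋₊ : ℝ) - m ⌊α ^ k⌋₊) ^ 2)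
        atTop (𝓝 0) := by
      refine l2.congr fun k => ?_
      simp only [Function.comp]
      exact ENNReal.toReal_ofReal (sq_nonneg _)
    have l4 : Tendsto (fun k : ℕ => T ⌊α ^ k⌋₊ ω / (⌊α ^ k⌋₊ : ℝ) - m ⌊α ^ k⌋₊)
        atTop (𝓝 0) := by
      have := (Real.continuous_sqrt.tendsto 0).comp l3
      rw [Real.sqrt_zero] at this
      rw [tendsto_zero_iff_abs_tendsto_zero]
      refine this.congr fun k => ?_
      simp only [Function.comp, Real.sqrt_sq_eq_abs]
    have l5 := l4.add (hm.comp hNlim)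
    rw [zero_add] at l5
    refine l5.congr' ?_
    filter_upwards [hA] with k hk
    simp only [Set.mem_setOf_eq, not_not] at hk
    simp [hk]
  have hall := ae_all_iff.2 fun j : ℕ => key (1 + 1 / ((j : ℝ) + 1))
    (by have : (0 : ℝ) < 1 / ((j : ℝ) + 1) := by positivity
        linarith)
  filter_upwards [hall] with ω hω
  refine tendsto_div_of_monotone_of_tendsto_div_floor_pow _ _ (hmono ω)
    (fun j : ℕ => 1 + 1 / ((j : ℝ) + 1)) (fun j => ?_) ?_ hω
  · have : (0 : ℝ) < 1 / ((j : ℝ) + 1) := by positivity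
    linarith
  · have := (tendsto_one_div_add_atTop_nhds_zero_nat (𝕜 := ℝ)).const_add 1
    simpa using this

/-- truncated square -/
noncomputable def truncSq (g : E → E → ℝ) (R : ℝ) (x y : E) : ℝ := (min |g x y| R) ^ 2

lemma truncSq_nonneg (g : E → E → ℝ) (R : ℝ) (x y : E) : 0 ≤ truncSq g R x y := sq_nonneg _

lemma truncSq_le (g : E → E → ℝ) {R : ℝ} (hR : 0 ≤ R) (x y : E) : truncSq g R x y ≤ R ^ 2 := by
  unfold truncSq
  exact pow_le_pow_left₀ (le_min (abs_nonneg _) hR) (min_le_right _ _) 2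

lemma truncSq_le' (g : E → E → ℝ) {R : ℝ} (hR : 0 ≤ R) (x y : E) :
    truncSq g R x y ≤ R * |g x y| := by
  unfold truncSq
  rw [sq]
  exact mul_le_mul (min_le_right _ _) (min_le_left _ _) (le_min (abs_nonneg _) hR) hR

lemma truncSq_le_sq (g : E → E → ℝ) {R : ℝ} (hR : 0 ≤ R) (x y : E) :
    truncSq g R x y ≤ g x y ^ 2 := by
  unfold truncSq
  rw [← sq_abs (g x y)]
  exact pow_le_pow_left₀ (le_min (abs_nonneg _) hR) (min_le_left _ _) 2

lemma truncSq_eq (g : E → E → ℝ) {R : ℝ} {x y : E} (h : |g x y| ≤ R) :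
    truncSq g R x y = g x y ^ 2 := by
  unfold truncSq
  rw [min_eq_left h, sq_abs]

lemma truncSq_lip {g : E → E → ℝ} {L : ℝ}
    (hg : ∀ x y x' y', |g x y - g x' y'| ≤ L * (dist x x' + dist y y')) {R : ℝ} (hR : 0 ≤ R)
    (x y x' y' : E) :
    |truncSq g R x y - truncSq g R x' y'| ≤ 2 * R * L * (dist x x' + dist y y') := by
  unfold truncSq
  have h1 : |min |g x y| R - min |g x' y'| R| ≤ L * (dist x x' + dist y y') := by
    refine (abs_inf_sub_inf_le_abs _ _ _).trans ((abs_abs_sub_abs_le _ _).trans (hg x y x' y'))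
  rw [sq_sub_sq, abs_mul]
  have h2 : |min |g x y| R + min |g x' y'| R| ≤ 2 * R := by
    have a := min_le_right |g x y| R
    have b := min_le_right |g x' y'| R
    have a' : 0 ≤ min |g x y| R := le_min (abs_nonneg _) hR
    have b' : 0 ≤ min |g x' y'| R := le_min (abs_nonneg _) hR
    rw [abs_of_nonneg (by linarith)]; linarith
  calc _ ≤ 2 * R * (L * (dist x x' + dist y y')) :=
        mul_le_mul h2 h1 (abs_nonneg _) (by linarith)
    _ = _ := by ring

lemma cont_of_lip2 {g : E → E → ℝ} {L : ℝ}
    (hg : ∀ x y x' y', |g x y - g x' y'| ≤ L * (dist x x' + dist y y')) :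
    Continuous (Function.uncurry g) := by
  refine LipschitzWith.continuous (K := (|L| * 2).toNNReal)
    (LipschitzWith.of_dist_le_mul fun p q => ?_)
  rw [Real.dist_eq, Real.coe_toNNReal _ (by positivity)]
  have h1 : dist p.1 q.1 ≤ dist p q := by rw [Prod.dist_eq]; exact le_max_left _ _
  have h2 : dist p.2 q.2 ≤ dist p q := by rw [Prod.dist_eq]; exact le_max_right _ _
  refine (hg p.1 p.2 q.1 q.2).trans ?_
  calc _ ≤ |L| * (dist p.1 q.1 + dist p.2 q.2) :=
        mul_le_mul_of_nonneg_right (le_abs_self L) (by positivity)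
    _ ≤ |L| * (2 * dist p q) := mul_le_mul_of_nonneg_left (by linarith) (abs_nonneg _)
    _ = _ := by ring

lemma truncSq_meas {g : E → E → ℝ} {L : ℝ}
    (hg : ∀ x y x' y', |g x y - g x' y'| ≤ L * (dist x x' + dist y y')) (R : ℝ) :
    Measurable (Function.uncurry (truncSq g R)) := by
  have := (cont_of_lip2 hg).measurable
  exact ((this.abs).min measurable_const).pow_const 2

/-- averaged truncated square -/
noncomputable def avgSq (π : Kernel E E) (g : E → E → ℝ) (R : ℝ) (x : E) : ℝ :=
  ∫ y, truncSq g R x y ∂(π x)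

section
variable {π : Kernel E E} [IsMarkovKernel π] {γ c : ℝ}

lemma avgSq_bound (g : E → E → ℝ) {R : ℝ} (hR : 0 ≤ R) (x : E) : |avgSq π g R x| ≤ R ^ 2 := by
  refine pfun_bound (π := π) (truncSq g R x) (D := R ^ 2) (fun y => ?_) x
  rw [abs_of_nonneg (truncSq_nonneg _ _ _ _)]
  exact truncSq_le g hR x y

lemma avgSq_lip (hγ : γ ∈ Set.Ioo (0 : ℝ) 1) (hc : 0 < c)
    (hH1 : ∀ ν : Measure E, FiniteFirstMoment ν → FiniteFirstMoment (Pmeas π ν))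
    (hH2 : ∀ n : ℕ, 1 ≤ n → ∀ ν₁ ν₂ : Measure E, FiniteFirstMoment ν₁ → FiniteFirstMoment ν₂ →
      wassDist ((Pmeas π)^[n] ν₁) ((Pmeas π)^[n] ν₂) ≤ c * γ ^ n * wassDist ν₁ ν₂)
    {g : E → E → ℝ} {L : ℝ} (hL : 0 ≤ L)
    (hg : ∀ x y x' y', |g x y - g x' y'| ≤ L * (dist x x' + dist y y')) {R : ℝ} (hR : 0 ≤ R) :
    LipschitzWith (2 * R * L * (1 + c)).toNNReal (avgSq π g R) := by
  refine LipschitzWith.of_dist_le_mul fun x x' => ?_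
  have hK : 0 ≤ 2 * R * L := by positivity
  have hl : ∀ z, LipschitzWith (2 * R * L).toNNReal (truncSq g R z) := fun z => by
    refine LipschitzWith.of_dist_le_mul fun y y' => ?_
    rw [Real.dist_eq, Real.coe_toNNReal _ hK]
    simpa using truncSq_lip hg hR z y z y'
  have h1 := pfun_lip1 hγ hc hH1 hH2 (hl x') x x'
  rw [Real.coe_toNNReal _ hK] at h1
  have hfx : FiniteFirstMoment (π x) := by rw [← pmeas_dirac]; exact hH1 _ (ffm_dirac x)
  have h2 : |avgSq π g R x - Pfun π (truncSq g R x') x| ≤ 2 * R * L * dist x x' := by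
    unfold avgSq Pfun
    rw [← integral_sub (ffm_lip hfx (hl x)) (ffm_lip hfx (hl x'))]
    have := norm_integral_le_of_norm_le_const (μ := π x)
      (f := fun y => truncSq g R x y - truncSq g R x' y) (C := 2 * R * L * dist x x')
      (Eventually.of_forall fun y => by
        simpa using truncSq_lip hg hR x y x' y)
    simpa using this
  rw [Real.dist_eq, Real.coe_toNNReal _ (by positivity)]
  have h3 : Pfun π (truncSq g R x') x' = avgSq π g R x' := rfl
  rw [h3] at h1
  calc |avgSq π g R x - avgSq π g R x'|
      ≤ |avgSq π g R x - Pfun π (truncSq g R x') x|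
        + |Pfun π (truncSq g R x') x - avgSq π g R x'| := abs_sub_le _ _ _
    _ ≤ _ := by linarith

lemma chain_first {ν : Measure E} {P : Measure (ℕ → E)} (hP : IsMarkovChainLaw π ν P)
    {g : E → E → ℝ} {L : ℝ}
    (hg : ∀ x y x' y', |g x y - g x' y'| ≤ L * (dist x x' + dist y y')) {R : ℝ} (hR : 0 ≤ R)
    (n : ℕ) :
    ∫ ω, truncSq g R (ω n) (ω (n + 1)) ∂P = ∫ ω, avgSq π g R (ω n) ∂P := by
  have := markov_two hP n (fun _ => 1) measurable_const (C := 1) (by simp) (truncSq g R)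
    (truncSq_meas hg R) (D := R ^ 2) (fun x y => by
      rw [abs_of_nonneg (truncSq_nonneg _ _ _ _)]; exact truncSq_le g hR x y)
  simp only [one_mul] at this
  exact this

lemma avgSq_decay (hγ : γ ∈ Set.Ioo (0 : ℝ) 1) (hc : 0 < c)
    (hH1 : ∀ ν : Measure E, FiniteFirstMoment ν → FiniteFirstMoment (Pmeas π ν))
    (hH2 : ∀ n : ℕ, 1 ≤ n → ∀ ν₁ ν₂ : Measure E, FiniteFirstMoment ν₁ → FiniteFirstMoment ν₂ →
      wassDist ((Pmeas π)^[n] ν₁) ((Pmeas π)^[n] ν₂) ≤ c * γ ^ n * wassDist ν₁ ν₂)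
    {μs : Measure E} (hμs : FiniteFirstMoment μs) (hinv : Pmeas π μs = μs)
    {Ps : Measure (ℕ → E)} (hPs : IsMarkovChainLaw π μs Ps)
    {g : E → E → ℝ} {L : ℝ} (hL : 0 ≤ L)
    (hg : ∀ x y x' y', |g x y - g x' y'| ≤ L * (dist x x' + dist y y')) (x₀ : E) :
    ∃ B : ℝ, 0 ≤ B ∧ ∀ (R : ℝ), 0 ≤ R → ∀ (j : ℕ) (x : E),
      |(Pfun π)^[j] (avgSq π g R) x - ∫ ω, truncSq g R (ω 0) (ω 1) ∂Ps| ≤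
        B * R * γ ^ j * (1 + dist x₀ x) := by
  have hp := hμs.1
  let D := ∫ y, dist x₀ y ∂μs
  have hD : 0 ≤ D := integral_nonneg fun _ => dist_nonneg
  refine ⟨2 * L * (1 + c) * (c + 1) * (1 + D), by positivity, fun R hR j x => ?_⟩
  have hlip := avgSq_lip hγ hc hH1 hH2 hL hg hR
  have e1 : ∫ ω, truncSq g R (ω 0) (ω 1) ∂Ps = ∫ x, avgSq π g R x ∂μs := by
    have := chain_first hPs hg hR 0
    rw [zero_add] at this
    rw [this, ← hPs.init, integral_map (measurable_pi_apply 0).aemeasurable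
      hlip.continuous.aestronglyMeasurable]
  have h := iter_diff hγ hc hH1 hH2 hlip j hμs x
  rw [pmeas_inv_iter hinv, ← e1, Real.coe_toNNReal _ (by positivity)] at h
  have h2 : ∫ y, dist x y ∂μs ≤ dist x₀ x + D := by
    have : dist x₀ x + D = ∫ y, (dist x₀ x + dist x₀ y) ∂μs := by
      rw [integral_add (integrable_const _) (ffm_dist hμs x₀)]; simp [D]
    rw [this]
    refine integral_mono (ffm_dist hμs x) ((integrable_const _).add (ffm_dist hμs x₀)) fun y => ?_
    have := dist_triangle x x₀ y
    rw [dist_comm x x₀] at this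
    exact this
  have h3 : ∫ y, dist x y ∂μs ≤ (1 + D) * (1 + dist x₀ x) := by
    have : 0 ≤ dist x₀ x := dist_nonneg
    nlinarith
  refine h.trans ?_
  have hg0 : 0 ≤ γ ^ j := pow_nonneg hγ.1.le j
  calc _ ≤ 2 * R * L * (1 + c) * ((c + 1) * γ ^ j * ((1 + D) * (1 + dist x₀ x))) := by gcongr
    _ = _ := by ring

/-- mean of the truncated square for the stationary chain is bounded by the moment bound -/
lemma star_le {B : ℝ} (hγ : γ ∈ Set.Ioo (0 : ℝ) 1)
    {μ : Measure E} (hμ : FiniteFirstMoment μ)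
    {P : Measure (ℕ → E)} (hP : IsMarkovChainLaw π μ P)
    {g : E → E → ℝ} {L : ℝ}
    (hg : ∀ x y x' y', |g x y - g x' y'| ≤ L * (dist x x' + dist y y')) (x₀ : E)
    {R m A : ℝ} (hR : 0 ≤ R) (hQ : Measurable (avgSq π g R))
    (hdec : ∀ (j : ℕ) (x : E), |(Pfun π)^[j] (avgSq π g R) x - m| ≤
        B * R * γ ^ j * (1 + dist x₀ x))
    (hA : ∀ n, ∫ ω, truncSq g R (ω n) (ω (n + 1)) ∂P ≤ A) : m ≤ A := by
  have := hP.prob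
  have hp := hμ.1
  have hI : Integrable (fun ω : ℕ → E => 1 + dist x₀ (ω 0)) P := by
    have h : Integrable (fun x => 1 + dist x₀ x) (P.map fun ω => ω 0) := by
      rw [hP.init]; exact (integrable_const _).add (ffm_dist hμ x₀)
    exact h.comp_measurable (measurable_pi_apply 0)
  have hmeas : ∀ j, Measurable ((Pfun π)^[j] (avgSq π g R)) ∧
      ∀ x, |(Pfun π)^[j] (avgSq π g R) x| ≤ R ^ 2 := by
    intro j
    induction j with
    | zero => exact ⟨hQ, fun x => avgSq_bound g hR x⟩
    | succ j ih =>
      rw [Function.iterate_succ_apply']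
      exact ⟨pfun_meas _ ih.1, pfun_bound _ ih.2⟩
  have hle : ∀ j : ℕ, m ≤ A + B * R * γ ^ j * ∫ ω, (1 + dist x₀ (ω 0)) ∂P := by
    intro j
    have h1 := hA j
    rw [chain_first hP hg hR j] at h1
    have h2 := markov_iter hP 0 (fun _ => 1) measurable_const (C := 1) (by simp) j
      (avgSq π g R) hQ (fun x => avgSq_bound (π := π) g hR x)
    simp only [one_mul, zero_add] at h2
    rw [h2] at h1
    have hi : Integrable (fun ω : ℕ → E => (Pfun π)^[j] (avgSq π g R) (ω 0)) P :=
      Integrable.of_bound (C := R ^ 2)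
        ((hmeas j).1.comp (measurable_pi_apply 0)).aestronglyMeasurable
        (Eventually.of_forall fun ω => (hmeas j).2 _)
    have h3 : m ≤ ∫ ω, ((Pfun π)^[j] (avgSq π g R) (ω 0) +
        B * R * γ ^ j * (1 + dist x₀ (ω 0))) ∂P := by
      have : m = ∫ _ω : ℕ → E, m ∂P := by simp
      rw [this]
      refine integral_mono (integrable_const _) (hi.add (hI.const_mul _)) fun ω => ?_
      have := (abs_le.1 (hdec j (ω 0))).1
      simp only [Pi.add_apply] at this ⊢
      linarith
    rw [integral_add hi (hI.const_mul _), integral_const_mul] at h3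
    linarith
  have hlim : Tendsto (fun j : ℕ => A + B * R * γ ^ j * ∫ ω, (1 + dist x₀ (ω 0)) ∂P) atTop
      (𝓝 (A + B * R * 0 * ∫ ω, (1 + dist x₀ (ω 0)) ∂P)) :=
    (((tendsto_pow_atTop_nhds_zero_of_lt_one hγ.1.le hγ.2).const_mul _).mul_const _).const_add _
  simp only [mul_zero, zero_mul, add_zero] at hlim
  exact ge_of_tendsto' hlim hle

/-- covariance bound -/
lemma cov_bound {B : ℝ} (hB : 0 ≤ B) (hγ : γ ∈ Set.Ioo (0 : ℝ) 1)
    {μ : Measure E} {P : Measure (ℕ → E)} (hP : IsMarkovChainLaw π μ P)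
    {g : E → E → ℝ} {L : ℝ}
    (hg : ∀ x y x' y', |g x y - g x' y'| ≤ L * (dist x x' + dist y y')) (x₀ : E)
    {R m A G M : ℝ} (hR : 1 ≤ R) (hQ : Measurable (avgSq π g R))
    (hdec : ∀ (j : ℕ) (x : E), |(Pfun π)^[j] (avgSq π g R) x - m| ≤
        B * R * γ ^ j * (1 + dist x₀ x))
    (hm0 : 0 ≤ m) (hmA : m ≤ A) (hG : 0 ≤ G)
    (hgG : ∀ x y, |g x y| ≤ G * (1 + dist x₀ x + dist x₀ y))
    (hUi : ∀ n, Integrable (fun ω : ℕ → E => (1 + dist x₀ (ω n) + dist x₀ (ω (n + 1))) ^ 2) P)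
    (hUM : ∀ n, ∫ ω : ℕ → E, (1 + dist x₀ (ω n) + dist x₀ (ω (n + 1))) ^ 2 ∂P ≤ M) :
    (∀ n, ∫ ω, (truncSq g R (ω n) (ω (n + 1)) - m) ^ 2 ∂P ≤ (G + A) ^ 2 * M * R ^ 2) ∧
    (∀ n j, |∫ ω, (truncSq g R (ω n) (ω (n + 1)) - m) *
      (truncSq g R (ω (n + 1 + j)) (ω (n + 1 + j + 1)) - m) ∂P| ≤
        (G + A) * B * M * R ^ 2 * γ ^ j) := by
  have := hP.prob
  have hR0 : 0 ≤ R := by linarith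
  have hA0 : 0 ≤ A := hm0.trans hmA
  have hpair : ∀ n, Measurable fun ω : ℕ → E => (ω n, ω (n + 1)) := fun n =>
    (measurable_pi_apply n).prodMk (measurable_pi_apply (n + 1))
  have hΦm : ∀ n, Measurable fun ω : ℕ → E => truncSq g R (ω n) (ω (n + 1)) - m := fun n =>
    ((truncSq_meas hg R).comp (hpair n)).sub_const m
  have hΦb : ∀ x y, |truncSq g R x y - m| ≤ R ^ 2 + A := fun x y => by
    have h1 := truncSq_nonneg g R x y
    have h2 := truncSq_le g hR0 x y
    rw [abs_le]; constructor <;> nlinarith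
  have hΦU : ∀ x y, |truncSq g R x y - m| ≤ R * (G + A) * (1 + dist x₀ x + dist x₀ y) := by
    intro x y
    have h1 := truncSq_nonneg g R x y
    have h2 := truncSq_le' g hR0 x y
    have h3 := mul_le_mul_of_nonneg_left (hgG x y) hR0
    have d1 : 0 ≤ dist x₀ x := dist_nonneg
    have d2 : 0 ≤ dist x₀ y := dist_nonneg
    have h4 : A ≤ R * A * (1 + dist x₀ x + dist x₀ y) := by
      have : A * 1 ≤ A * (R * (1 + dist x₀ x + dist x₀ y)) :=
        mul_le_mul_of_nonneg_left (by nlinarith) hA0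
      linarith
    have h5 : 0 ≤ R * (G * (1 + dist x₀ x + dist x₀ y)) := by positivity
    rw [abs_le]; constructor <;> nlinarith
  constructor
  · intro n
    calc ∫ ω, (truncSq g R (ω n) (ω (n + 1)) - m) ^ 2 ∂P
        ≤ ∫ ω : ℕ → E, (R * (G + A)) ^ 2 * (1 + dist x₀ (ω n) + dist x₀ (ω (n + 1))) ^ 2 ∂P := by
          refine integral_mono_of_nonneg (Eventually.of_forall fun ω => sq_nonneg _)
            ((hUi n).const_mul _) (Eventually.of_forall fun ω => ?_)
          simp only
          rw [← mul_pow, ← sq_abs (truncSq g R (ω n) (ω (n + 1)) - m)]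
          exact pow_le_pow_left₀ (abs_nonneg _) (hΦU _ _) 2
      _ ≤ (R * (G + A)) ^ 2 * M := by
          rw [integral_const_mul]
          exact mul_le_mul_of_nonneg_left (hUM n) (sq_nonneg _)
      _ = _ := by ring
  · intro n j
    let W : (ℕ → E) → ℝ := fun ω => truncSq g R (ω n) (ω (n + 1)) - m
    have hWm : Measurable[natFilt (n + 1)] W := by
      have a : Measurable[natFilt (E := E) (n + 1)] fun ω : ℕ → E => ω n :=
        (adapted_coord n).mono (natFilt.mono (Nat.le_succ n)) le_rfl
      exact ((truncSq_meas hg R).comp (a.prodMk (adapted_coord (n + 1)))).sub_const m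
    have hWb : ∀ ω, |W ω| ≤ R ^ 2 + A := fun ω => hΦb _ _
    have hWi : Integrable W P :=
      Integrable.of_bound (hΦm n).aestronglyMeasurable (R ^ 2 + A) (Eventually.of_forall hWb)
    have hprodi : ∀ (F : (ℕ → E) → ℝ) (D : ℝ), Measurable F → (∀ ω, |F ω| ≤ D) →
        Integrable (fun ω => W ω * F ω) P := by
      intro F D hF hD
      exact hWi.mul_bdd hF.aestronglyMeasurable (c := D) (Eventually.of_forall hD)
    have hmeas : ∀ j, Measurable ((Pfun π)^[j] (avgSq π g R)) ∧
        ∀ x, |(Pfun π)^[j] (avgSq π g R) x| ≤ R ^ 2 := by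
      intro j
      induction j with
      | zero => exact ⟨hQ, fun x => avgSq_bound g hR0 x⟩
      | succ j ih =>
        rw [Function.iterate_succ_apply']
        exact ⟨pfun_meas _ ih.1, pfun_bound _ ih.2⟩
    have htb : ∀ x y, |truncSq g R x y| ≤ R ^ 2 := fun x y => by
      rw [abs_of_nonneg (truncSq_nonneg _ _ _ _)]; exact truncSq_le g hR0 x y
    have h1 := markov_two hP (n + 1 + j) W
      (hWm.mono (natFilt.mono (Nat.le_add_right _ _)) le_rfl) hWb (truncSq g R)
      (truncSq_meas hg R) htb
    have h2 := markov_iter hP (n + 1) W hWm hWb j (avgSq π g R) hQ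
      (fun x => avgSq_bound (π := π) g hR0 x)
    have e : ∫ ω, W ω * (truncSq g R (ω (n + 1 + j)) (ω (n + 1 + j + 1)) - m) ∂P =
        ∫ ω, W ω * ((Pfun π)^[j] (avgSq π g R) (ω (n + 1)) - m) ∂P := by
      simp only [mul_sub]
      have i1 : Integrable (fun ω : ℕ → E =>
          W ω * truncSq g R (ω (n + 1 + j)) (ω (n + 1 + j + 1))) P :=
        hprodi _ (R ^ 2) ((truncSq_meas hg R).comp (hpair _)) fun ω => htb _ _
      have i2 : Integrable (fun ω : ℕ → E => W ω * (Pfun π)^[j] (avgSq π g R) (ω (n + 1))) P :=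
        hprodi _ (R ^ 2) ((hmeas j).1.comp (measurable_pi_apply _)) fun ω => (hmeas j).2 _
      rw [integral_sub i1 (hWi.mul_const m), integral_sub i2 (hWi.mul_const m), h1]
      exact congrArg (· - _) h2
    change |∫ ω, W ω * (truncSq g R (ω (n + 1 + j)) (ω (n + 1 + j + 1)) - m) ∂P| ≤ _
    rw [e]
    have hg0 : 0 ≤ γ ^ j := pow_nonneg hγ.1.le j
    have hcoef : 0 ≤ R * (G + A) * (B * R * γ ^ j) := by positivity
    calc _ ≤ ∫ ω, |W ω * ((Pfun π)^[j] (avgSq π g R) (ω (n + 1)) - m)| ∂P :=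
          abs_integral_le_integral_abs
      _ ≤ ∫ ω : ℕ → E, (R * (G + A) * (B * R * γ ^ j)) *
            (1 + dist x₀ (ω n) + dist x₀ (ω (n + 1))) ^ 2 ∂P := by
          refine integral_mono_of_nonneg (Eventually.of_forall fun ω => abs_nonneg _)
            ((hUi n).const_mul _) (Eventually.of_forall fun ω => ?_)
          simp only [abs_mul]
          have a1 : |W ω| ≤ _ := hΦU (ω n) (ω (n + 1))
          have a2 := hdec j (ω (n + 1))
          have d1 : 0 ≤ dist x₀ (ω n) := dist_nonneg
          have d2 : 0 ≤ dist x₀ (ω (n + 1)) := dist_nonneg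
          have a3 : B * R * γ ^ j * (1 + dist x₀ (ω (n + 1))) ≤
              B * R * γ ^ j * (1 + dist x₀ (ω n) + dist x₀ (ω (n + 1))) :=
            mul_le_mul_of_nonneg_left (by linarith) (by positivity)
          calc _ ≤ (R * (G + A) * (1 + dist x₀ (ω n) + dist x₀ (ω (n + 1)))) *
                (B * R * γ ^ j * (1 + dist x₀ (ω n) + dist x₀ (ω (n + 1)))) :=
                mul_le_mul a1 (a2.trans a3) (abs_nonneg _) (by positivity)
            _ = _ := by ring
      _ ≤ (R * (G + A) * (B * R * γ ^ j)) * M := by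
          rw [integral_const_mul]
          exact mul_le_mul_of_nonneg_left (hUM n) hcoef
      _ = _ := by ring

end

section
variable {π : Kernel E E} [IsMarkovKernel π] {γ c : ℝ}

lemma moment_U {P : Measure (ℕ → E)} [IsProbabilityMeasure P] (x₀ : E) {q : ℝ} (hq : 2 < q)
    (hint : ∀ n : ℕ, Integrable (fun ω : ℕ → E => dist x₀ (ω n) ^ q) P)
    (hM : ∃ M : ℝ, ∀ n : ℕ, ∫ ω : ℕ → E, dist x₀ (ω n) ^ q ∂P ≤ M) :
    ∃ M : ℝ, 0 ≤ M ∧ ∀ n,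
      Integrable (fun ω : ℕ → E => (1 + dist x₀ (ω n) + dist x₀ (ω (n + 1))) ^ q) P ∧
      ∫ ω : ℕ → E, (1 + dist x₀ (ω n) + dist x₀ (ω (n + 1))) ^ q ∂P ≤ M ∧
      Integrable (fun ω : ℕ → E => (1 + dist x₀ (ω n) + dist x₀ (ω (n + 1))) ^ 2) P ∧
      ∫ ω : ℕ → E, (1 + dist x₀ (ω n) + dist x₀ (ω (n + 1))) ^ 2 ∂P ≤ M := by
  obtain ⟨M, hM⟩ := hM
  have hq0 : 0 ≤ q := by linarith
  have hM0 : 0 ≤ M := (integral_nonneg fun ω => Real.rpow_nonneg dist_nonneg q).trans (hM 0)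
  have hb : ∀ a b : ℝ, 0 ≤ a → 0 ≤ b → (1 + a + b) ^ q ≤ 3 ^ q * (1 + a ^ q + b ^ q) := by
    intro a b ha hb
    have pa := Real.rpow_nonneg ha q
    have pb := Real.rpow_nonneg hb q
    have h3 : (0 : ℝ) ≤ 3 ^ q := by positivity
    have gen : ∀ z : ℝ, 0 ≤ z → 1 + a + b ≤ 3 * z → z ^ q ≤ 1 + a ^ q + b ^ q →
        (1 + a + b) ^ q ≤ 3 ^ q * (1 + a ^ q + b ^ q) := by
      intro z hz h1 h2
      calc (1 + a + b) ^ q ≤ (3 * z) ^ q := Real.rpow_le_rpow (by positivity) h1 hq0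
        _ = 3 ^ q * z ^ q := Real.mul_rpow (by norm_num) hz
        _ ≤ _ := mul_le_mul_of_nonneg_left h2 h3
    rcases le_total a 1 with h1 | h1
    · rcases le_total b 1 with h2 | h2
      · exact gen 1 (by norm_num) (by linarith) (by rw [Real.one_rpow]; linarith)
      · exact gen b hb (by linarith) (by linarith)
    · rcases le_total a b with h2 | h2
      · exact gen b hb (by linarith) (by linarith)
      · exact gen a ha (by linarith) (by linarith)
  have hmeas : ∀ n, Measurable fun ω : ℕ → E => 1 + dist x₀ (ω n) + dist x₀ (ω (n + 1)) := by
    intro n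
    fun_prop
  have hDi : ∀ n, Integrable (fun ω : ℕ → E =>
      3 ^ q * (1 + dist x₀ (ω n) ^ q + dist x₀ (ω (n + 1)) ^ q)) P := fun n =>
    (((integrable_const 1).add (hint n)).add (hint (n + 1))).const_mul _
  have hDM : ∀ n, ∫ ω : ℕ → E, 3 ^ q * (1 + dist x₀ (ω n) ^ q + dist x₀ (ω (n + 1)) ^ q) ∂P ≤
      3 ^ q * (1 + M + M) := fun n => by
    have i1 : Integrable (fun ω : ℕ → E => (1:ℝ) + dist x₀ (ω n) ^ q) P :=
      (integrable_const 1).add (hint n)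
    rw [integral_const_mul, integral_add i1 (hint (n + 1)),
      integral_add (integrable_const 1) (hint n)]
    refine mul_le_mul_of_nonneg_left ?_ (by positivity)
    have h1 := hM n
    have h2 := hM (n + 1)
    simp only [integral_const, probReal_univ, smul_eq_mul, mul_one]
    linarith
  have hqi : ∀ n, Integrable (fun ω : ℕ → E =>
      (1 + dist x₀ (ω n) + dist x₀ (ω (n + 1))) ^ q) P := fun n => by
    refine (hDi n).mono' ((hmeas n).pow_const q).aestronglyMeasurable
      (Eventually.of_forall fun ω => ?_)
    rw [Real.norm_of_nonneg (by positivity)]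
    exact hb _ _ dist_nonneg dist_nonneg
  have h2q : ∀ (n : ℕ) (ω : ℕ → E), (1 + dist x₀ (ω n) + dist x₀ (ω (n + 1))) ^ 2 ≤
      (1 + dist x₀ (ω n) + dist x₀ (ω (n + 1))) ^ q := fun n ω => by
    rw [← Real.rpow_natCast]
    refine Real.rpow_le_rpow_of_exponent_le ?_ (by exact_mod_cast hq.le)
    have d1 : 0 ≤ dist x₀ (ω n) := dist_nonneg
    have d2 : 0 ≤ dist x₀ (ω (n + 1)) := dist_nonneg
    linarith
  have hqM : ∀ n, ∫ ω : ℕ → E, (1 + dist x₀ (ω n) + dist x₀ (ω (n + 1))) ^ q ∂P ≤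
      3 ^ q * (1 + M + M) := fun n =>
    (integral_mono (hqi n) (hDi n) fun ω => hb _ _ dist_nonneg dist_nonneg).trans (hDM n)
  have h2i : ∀ n, Integrable (fun ω : ℕ → E =>
      (1 + dist x₀ (ω n) + dist x₀ (ω (n + 1))) ^ 2) P := fun n => by
    refine (hqi n).mono' ((hmeas n).pow_const 2).aestronglyMeasurable
      (Eventually.of_forall fun ω => ?_)
    rw [Real.norm_of_nonneg (by positivity)]
    exact h2q n ω
  exact ⟨3 ^ q * (1 + M + M), by positivity, fun n => ⟨hqi n, hqM n, h2i n,
    (integral_mono (h2i n) (hqi n) (h2q n)).trans (hqM n)⟩⟩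

/-- the stationary truncated means converge to the full mean -/
lemma star_tendsto {Ps : Measure (ℕ → E)} [IsProbabilityMeasure Ps]
    {g : E → E → ℝ} {L : ℝ}
    (hg : ∀ x y x' y', |g x y - g x' y'| ≤ L * (dist x x' + dist y y')) {A : ℝ}
    (hA : ∀ R : ℝ, 1 ≤ R → ∫ ω, truncSq g R (ω 0) (ω 1) ∂Ps ≤ A)
    (R : ℕ → ℝ) (hR1 : ∀ n, 0 ≤ R n) (hR : Tendsto R atTop atTop) :
    Tendsto (fun n => ∫ ω, truncSq g (R n) (ω 0) (ω 1) ∂Ps) atTop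
      (𝓝 (∫ ω, g (ω 0) (ω 1) ^ 2 ∂Ps)) := by
  have hpair : Measurable fun ω : ℕ → E => (ω 0, ω 1) :=
    (measurable_pi_apply 0).prodMk (measurable_pi_apply 1)
  have htm : ∀ R, Measurable fun ω : ℕ → E => truncSq g R (ω 0) (ω 1) := fun R =>
    (truncSq_meas hg R).comp hpair
  have hgm : Measurable fun ω : ℕ → E => g (ω 0) (ω 1) ^ 2 :=
    ((cont_of_lip2 hg).measurable.comp hpair).pow_const 2
  have hlim : ∀ (R : ℕ → ℝ), Tendsto R atTop atTop → ∀ ω : ℕ → E,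
      Tendsto (fun n => truncSq g (R n) (ω 0) (ω 1)) atTop (𝓝 (g (ω 0) (ω 1) ^ 2)) := by
    intro R hR ω
    refine tendsto_const_nhds.congr' ?_
    filter_upwards [hR.eventually_ge_atTop |g (ω 0) (ω 1)|] with n hn
    exact (truncSq_eq g hn).symm
  have hti : ∀ R, 0 ≤ R → Integrable (fun ω : ℕ → E => truncSq g R (ω 0) (ω 1)) Ps := fun R hR =>
    Integrable.of_bound (C := R ^ 2) (htm R).aestronglyMeasurable (Eventually.of_forall fun ω => by
      rw [Real.norm_of_nonneg (truncSq_nonneg _ _ _ _)]; exact truncSq_le g hR _ _)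
  have hint : Integrable (fun ω : ℕ → E => g (ω 0) (ω 1) ^ 2) Ps := by
    refine ⟨hgm.aestronglyMeasurable, ?_⟩
    rw [hasFiniteIntegral_iff_ofReal (Eventually.of_forall fun ω => sq_nonneg _)]
    have hR' : Tendsto (fun n : ℕ => (n : ℝ) + 1) atTop atTop :=
      tendsto_atTop_add_const_right _ _ tendsto_natCast_atTop_atTop
    have hF : ∫⁻ ω : ℕ → E, ENNReal.ofReal (g (ω 0) (ω 1) ^ 2) ∂Ps ≤
        liminf (fun n : ℕ => ∫⁻ ω : ℕ → E,
          ENNReal.ofReal (truncSq g ((n : ℝ) + 1) (ω 0) (ω 1)) ∂Ps) atTop := by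
      refine le_trans (le_of_eq ?_) (lintegral_liminf_le fun n => (htm _).ennreal_ofReal)
      refine lintegral_congr fun ω => ?_
      exact ((ENNReal.tendsto_ofReal (hlim _ hR' ω)).liminf_eq).symm
    have hF2 : liminf (fun n : ℕ => ∫⁻ ω : ℕ → E,
          ENNReal.ofReal (truncSq g ((n : ℝ) + 1) (ω 0) (ω 1)) ∂Ps) atTop ≤ ENNReal.ofReal A := by
      refine (liminf_le_liminf (v := fun _ : ℕ => ENNReal.ofReal A)
        (Eventually.of_forall fun n => ?_)).trans (le_of_eq (liminf_const _))
      have hn : (1 : ℝ) ≤ (n : ℝ) + 1 := by have := Nat.cast_nonneg (α := ℝ) n; linarith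
      rw [← ofReal_integral_eq_lintegral_ofReal (hti _ (by linarith))
        (Eventually.of_forall fun ω => truncSq_nonneg _ _ _ _)]
      exact ENNReal.ofReal_le_ofReal (hA _ hn)
    exact (hF.trans hF2).trans_lt ENNReal.ofReal_lt_top
  refine tendsto_integral_of_dominated_convergence _ (fun n => (htm _).aestronglyMeasurable) hint
    (fun n => Eventually.of_forall fun ω => ?_) (Eventually.of_forall fun ω => hlim R hR ω)
  rw [Real.norm_of_nonneg (truncSq_nonneg _ _ _ _)]
  exact truncSq_le_sq g (hR1 n) _ _

theorem main_aux (hγ : γ ∈ Set.Ioo (0 : ℝ) 1) (hc : 0 < c)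
    (hH1 : ∀ ν : Measure E, FiniteFirstMoment ν → FiniteFirstMoment (Pmeas π ν))
    (hH2 : ∀ n : ℕ, 1 ≤ n → ∀ ν₁ ν₂ : Measure E, FiniteFirstMoment ν₁ → FiniteFirstMoment ν₂ →
      wassDist ((Pmeas π)^[n] ν₁) ((Pmeas π)^[n] ν₂) ≤ c * γ ^ n * wassDist ν₁ ν₂)
    {μ : Measure E} (hμ : FiniteFirstMoment μ)
    {P : Measure (ℕ → E)} (hP : IsMarkovChainLaw π μ P)
    (x₀ : E) {q : ℝ} (hq : 2 < q)
    (hint : ∀ n : ℕ, Integrable (fun ω : ℕ → E => dist x₀ (ω n) ^ q) P)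
    (hM : ∃ M : ℝ, ∀ n : ℕ, ∫ ω : ℕ → E, dist x₀ (ω n) ^ q ∂P ≤ M)
    {μs : Measure E} (hμs : FiniteFirstMoment μs) (hinv : Pmeas π μs = μs)
    {Ps : Measure (ℕ → E)} (hPs : IsMarkovChainLaw π μs Ps)
    {g : E → E → ℝ} {L : ℝ} (hL : 0 ≤ L)
    (hg : ∀ x y x' y', |g x y - g x' y'| ≤ L * (dist x x' + dist y y'))
    (t : ℕ → ℕ) (ht : ∀ l k, l < k → t l + 1 + (k - l) ≤ t k) :
    ∀ᵐ ω ∂P, Tendsto (fun n : ℕ => (∑ l ∈ Finset.Icc 1 n, g (ω (t l)) (ω (t l + 1)) ^ 2) / (n : ℝ))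
      atTop (𝓝 (∫ ω, g (ω 0) (ω 1) ^ 2 ∂Ps)) := by
  have := hP.prob
  have := hPs.prob
  obtain ⟨M, hM0, hU⟩ := moment_U x₀ hq hint hM
  obtain ⟨B, hB, hdec⟩ := avgSq_decay hγ hc hH1 hH2 hμs hinv hPs hL hg x₀
  have hQ : ∀ R, 0 ≤ R → Measurable (avgSq π g R) := fun R hR =>
    (avgSq_lip hγ hc hH1 hH2 hL hg hR).continuous.measurable
  obtain ⟨G, hG, hgG⟩ : ∃ G : ℝ, 0 < G ∧ ∀ x y, |g x y| ≤ G * (1 + dist x₀ x + dist x₀ y) := by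
    refine ⟨L + |g x₀ x₀| + 1, by positivity, fun x y => ?_⟩
    have h1 := hg x y x₀ x₀
    have h2 := abs_sub_abs_le_abs_sub (g x y) (g x₀ x₀)
    rw [dist_comm x, dist_comm y] at h1
    have d1 : 0 ≤ dist x₀ x := dist_nonneg
    have d2 : 0 ≤ dist x₀ y := dist_nonneg
    have d3 := abs_nonneg (g x₀ x₀)
    have d4 : 0 ≤ |g x₀ x₀| * (dist x₀ x + dist x₀ y) := by positivity
    nlinarith
  have hpair : ∀ n, Measurable fun ω : ℕ → E => (ω n, ω (n + 1)) := fun n =>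
    (measurable_pi_apply n).prodMk (measurable_pi_apply (n + 1))
  have htm : ∀ R n, Measurable fun ω : ℕ → E => truncSq g R (ω n) (ω (n + 1)) := fun R n =>
    (truncSq_meas hg R).comp (hpair n)
  let mR : ℝ → ℝ := fun R => ∫ ω, truncSq g R (ω 0) (ω 1) ∂Ps
  have hmR0 : ∀ R, 0 ≤ mR R := fun R => integral_nonneg fun ω => truncSq_nonneg _ _ _ _
  let A : ℝ := G ^ 2 * M
  have hA0 : 0 ≤ A := by positivity
  have hmA : ∀ R, 1 ≤ R → mR R ≤ A := by
    intro R hR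
    have hR0 : 0 ≤ R := by linarith
    refine star_le hγ hμ hP hg x₀ hR0 (hQ R hR0) (hdec R hR0) fun n => ?_
    calc ∫ ω, truncSq g R (ω n) (ω (n + 1)) ∂P
        ≤ ∫ ω : ℕ → E, G ^ 2 * (1 + dist x₀ (ω n) + dist x₀ (ω (n + 1))) ^ 2 ∂P := by
          refine integral_mono_of_nonneg (Eventually.of_forall fun ω => truncSq_nonneg _ _ _ _)
            ((hU n).2.2.1.const_mul _) (Eventually.of_forall fun ω => ?_)
          refine (truncSq_le_sq g hR0 _ _).trans ?_
          simp only
          rw [← mul_pow, ← sq_abs (g _ _)]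
          exact pow_le_pow_left₀ (abs_nonneg _) (hgG _ _) 2
      _ ≤ G ^ 2 * M := by
          rw [integral_const_mul]
          exact mul_le_mul_of_nonneg_left (hU n).2.2.2 (sq_nonneg _)
  -- covariances
  let K : ℝ := (G + A) ^ 2 * M + (G + A) * B * M * 1
  have hK0 : 0 ≤ K := by positivity
  have hcov : ∀ R, 1 ≤ R → ∀ l k, |∫ ω, (truncSq g R (ω (t l)) (ω (t l + 1)) - mR R) *
      (truncSq g R (ω (t k)) (ω (t k + 1)) - mR R) ∂P| ≤ K * R ^ 2 * γ ^ ((k - l) + (l - k)) := by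
    intro R hR
    have hR0 : 0 ≤ R := by linarith
    obtain ⟨c1, c2⟩ := cov_bound hB hγ hP hg x₀ hR (hQ R hR0) (hdec R hR0) (hmR0 R) (hmA R hR)
      hG.le hgG (fun n => (hU n).2.2.1) (fun n => (hU n).2.2.2)
    have hlt : ∀ l k, l < k → |∫ ω, (truncSq g R (ω (t l)) (ω (t l + 1)) - mR R) *
      (truncSq g R (ω (t k)) (ω (t k + 1)) - mR R) ∂P| ≤ K * R ^ 2 * γ ^ (k - l) := by
      intro l k hlk
      obtain ⟨j, hj⟩ := Nat.exists_eq_add_of_le (ht l k hlk)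
      have := c2 (t l) ((k - l) + j)
      have e : t l + 1 + ((k - l) + j) = t k := by omega
      rw [e] at this
      refine this.trans ?_
      have hpow : γ ^ ((k - l) + j) ≤ γ ^ (k - l) :=
        pow_le_pow_of_le_one hγ.1.le hγ.2.le (Nat.le_add_right _ _)
      have hKK : (G + A) * B * M ≤ K := by
        have : 0 ≤ (G + A) ^ 2 * M := by positivity
        simp only [K]; linarith
      have : 0 ≤ γ ^ ((k - l) + j) := pow_nonneg hγ.1.le _
      gcongr
    intro l k
    rcases lt_trichotomy l k with h | rfl | h
    · have := hlt l k h
      rwa [show (k - l) + (l - k) = k - l by omega]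
    · have h1 := c1 (t l)
      simp only [← sq]
      rw [abs_of_nonneg (integral_nonneg fun ω => sq_nonneg _)]
      refine h1.trans ?_
      simp only [Nat.sub_self, add_zero, pow_zero, mul_one]
      have hKK : (G + A) ^ 2 * M ≤ K := by
        have : 0 ≤ (G + A) * B * M * 1 := by positivity
        simp only [K]; linarith
      gcongr
    · have := hlt k l h
      rw [show (k - l) + (l - k) = l - k by omega]
      simpa only [mul_comm] using this
  -- exponents
  obtain ⟨b, hb1, hb2⟩ : ∃ b : ℝ, 1 / q < b ∧ b < 1 / 2 :=
    exists_between (one_div_lt_one_div_of_lt (by norm_num) hq)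
  have hq0 : 0 < q := by linarith
  have hb0 : 0 < b := lt_trans (by positivity) hb1
  have hbq : 1 < b * q := by rwa [div_lt_iff₀ hq0] at hb1
  let θ : ℝ := min (b * q - 1) (1 - 2 * b)
  have hθ : 0 < θ := lt_min (by linarith) (by linarith)
  let C1 : ℝ := G ^ q * M
  let C2 : ℝ := K * (2 * (1 - γ)⁻¹)
  have hγ1 : 0 < 1 - γ := by linarith [hγ.2]
  have hC1 : 0 ≤ C1 := by positivity
  have hC2 : 0 ≤ C2 := by positivity
  have hRN : ∀ N : ℕ, 1 ≤ N → (1 : ℝ) ≤ (N : ℝ) ^ b := fun N hN =>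
    Real.one_le_rpow (by exact_mod_cast hN) hb0.le
  refine slln_subseq P (fun n ω => ∑ l ∈ Finset.Icc 1 n, g (ω (t l)) (ω (t l + 1)) ^ 2)
    (fun n ω => ∑ l ∈ Finset.Icc 1 n, truncSq g ((n : ℝ) ^ b) (ω (t l)) (ω (t l + 1)))
    (fun ω a b hab => ?_) (fun n => Finset.measurable_fun_sum _ fun l _ => htm _ _)
    (fun n => mR ((n : ℝ) ^ b)) _ ?_ (C1 + C2) θ (by positivity) hθ ?_ ?_
  · exact Finset.sum_le_sum_of_subset_of_nonneg (Finset.Icc_subset_Icc_right hab)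
      fun _ _ _ => sq_nonneg _
  · exact star_tendsto hg hmA (fun n : ℕ => (n : ℝ) ^ b)
      (fun n => by positivity) ((tendsto_rpow_atTop hb0).comp tendsto_natCast_atTop_atTop)
  · intro N hN
    have hN0 : (0 : ℝ) < N := by exact_mod_cast hN
    have hN1 : (1 : ℝ) ≤ N := by exact_mod_cast hN
    set R : ℝ := (N : ℝ) ^ b with hRdef
    have hR1 : 1 ≤ R := hRN N hN
    have hR0 : 0 < R := by linarith
    have hone : ∀ n, P {ω : ℕ → E | (R / G) ^ q ≤
        (1 + dist x₀ (ω n) + dist x₀ (ω (n + 1))) ^ q} ≤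
        ENNReal.ofReal (C1 * (N : ℝ) ^ (-(b * q))) := by
      intro n
      have h := mul_meas_ge_le_integral_of_nonneg (μ := P)
        (f := fun ω : ℕ → E => (1 + dist x₀ (ω n) + dist x₀ (ω (n + 1))) ^ q)
        (Eventually.of_forall fun ω => by positivity) (hU n).1 ((R / G) ^ q)
      have hpos : 0 < (R / G) ^ q := by positivity
      rw [← ofReal_measureReal]
      refine ENNReal.ofReal_le_ofReal ?_
      have h' := h.trans (hU n).2.1
      rw [mul_comm, ← le_div_iff₀ hpos] at h'
      refine h'.trans (le_of_eq ?_)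
      rw [Real.div_rpow hR0.le hG.le, hRdef, ← Real.rpow_mul hN0.le, Real.rpow_neg hN0.le]
      simp only [C1]
      field_simp
    have hsub : {ω : ℕ → E | ∑ l ∈ Finset.Icc 1 N, g (ω (t l)) (ω (t l + 1)) ^ 2 ≠
        ∑ l ∈ Finset.Icc 1 N, truncSq g R (ω (t l)) (ω (t l + 1))} ⊆
        ⋃ l ∈ Finset.Icc 1 N, {ω : ℕ → E | (R / G) ^ q ≤
          (1 + dist x₀ (ω (t l)) + dist x₀ (ω (t l + 1))) ^ q} := by
      intro ω hω
      by_contra hcon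
      apply hω
      refine Finset.sum_congr rfl fun l hl => ?_
      refine (truncSq_eq g ?_).symm
      by_contra hgt
      push Not at hgt
      apply hcon
      refine Set.mem_biUnion hl ?_
      change (R / G) ^ q ≤ (1 + dist x₀ (ω (t l)) + dist x₀ (ω (t l + 1))) ^ q
      refine Real.rpow_le_rpow (by positivity) ?_ hq0.le
      rw [div_le_iff₀ hG, mul_comm]
      exact hgt.le.trans (hgG _ _)
    calc _ ≤ P (⋃ l ∈ Finset.Icc 1 N, {ω : ℕ → E | (R / G) ^ q ≤
          (1 + dist x₀ (ω (t l)) + dist x₀ (ω (t l + 1))) ^ q}) := measure_mono hsub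
      _ ≤ ∑ l ∈ Finset.Icc 1 N, P {ω : ℕ → E | (R / G) ^ q ≤
          (1 + dist x₀ (ω (t l)) + dist x₀ (ω (t l + 1))) ^ q} := measure_biUnion_finset_le _ _
      _ ≤ ∑ l ∈ Finset.Icc 1 N, ENNReal.ofReal (C1 * (N : ℝ) ^ (-(b * q))) :=
          Finset.sum_le_sum fun l _ => hone (t l)
      _ = ENNReal.ofReal (N * (C1 * (N : ℝ) ^ (-(b * q)))) := by
          rw [Finset.sum_const, Nat.card_Icc, Nat.add_sub_cancel, nsmul_eq_mul,
            ENNReal.ofReal_mul hN0.le, ENNReal.ofReal_natCast]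
      _ ≤ _ := by
          refine ENNReal.ofReal_le_ofReal ?_
          have e : N * (C1 * (N : ℝ) ^ (-(b * q))) = C1 * (N : ℝ) ^ (-(b * q - 1)) := by
            rw [show -(b * q - 1) = 1 + -(b * q) by ring, Real.rpow_add hN0, Real.rpow_one]; ring
          rw [e]
          have : (N : ℝ) ^ (-(b * q - 1)) ≤ (N : ℝ) ^ (-θ) :=
            Real.rpow_le_rpow_of_exponent_le hN1 (neg_le_neg (min_le_left _ _))
          exact mul_le_mul (by linarith) this (by positivity) (by positivity)
  · intro N hN
    have hN0 : (0 : ℝ) < N := by exact_mod_cast hN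
    have hN1 : (1 : ℝ) ≤ N := by exact_mod_cast hN
    set R : ℝ := (N : ℝ) ^ b with hRdef
    have hR1 : 1 ≤ R := hRN N hN
    have hR0 : 0 ≤ R := by linarith
    let Φ : ℕ → (ℕ → E) → ℝ := fun l ω => truncSq g R (ω (t l)) (ω (t l + 1)) - mR R
    have hΦm : ∀ l, Measurable (Φ l) := fun l => (htm R _).sub_const _
    have hΦb : ∀ l ω, |Φ l ω| ≤ R ^ 2 + A := fun l ω => by
      have h1 := truncSq_nonneg g R (ω (t l)) (ω (t l + 1))
      have h2 := truncSq_le g hR0 (ω (t l)) (ω (t l + 1))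
      have h3 := hmR0 R
      have h4 := hmA R hR1
      simp only [Φ]
      rw [abs_le]; constructor <;> nlinarith
    have hΦi : ∀ l k, Integrable (fun ω => Φ l ω * Φ k ω) P := fun l k =>
      (Integrable.of_bound (hΦm l).aestronglyMeasurable (R ^ 2 + A)
        (Eventually.of_forall (hΦb l))).mul_bdd (hΦm k).aestronglyMeasurable (c := R ^ 2 + A)
        (Eventually.of_forall (hΦb k))
    have e1 : ∀ ω : ℕ → E,
        ((∑ l ∈ Finset.Icc 1 N, truncSq g R (ω (t l)) (ω (t l + 1))) / N - mR R) ^ 2 =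
        ((N : ℝ) ^ 2)⁻¹ * ∑ l ∈ Finset.Icc 1 N, ∑ k ∈ Finset.Icc 1 N, Φ l ω * Φ k ω := by
      intro ω
      rw [← Finset.sum_mul_sum]
      simp only [Φ, Finset.sum_sub_distrib, Finset.sum_const, Nat.card_Icc, Nat.add_sub_cancel,
        nsmul_eq_mul]
      field_simp
    have hsumi : Integrable (fun ω => ((N : ℝ) ^ 2)⁻¹ *
        ∑ l ∈ Finset.Icc 1 N, ∑ k ∈ Finset.Icc 1 N, Φ l ω * Φ k ω) P :=
      (integrable_finsetSum _ fun l _ => integrable_finsetSum _ fun k _ => hΦi l k).const_mul _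
    simp only [e1]
    rw [← ofReal_integral_eq_lintegral_ofReal hsumi
      (Eventually.of_forall fun ω => by simp only [← e1]; exact sq_nonneg _)]
    refine ENNReal.ofReal_le_ofReal ?_
    rw [integral_const_mul, integral_finsetSum _ fun l _ =>
      integrable_finsetSum _ fun k _ => hΦi l k]
    have e2 : ∀ l, ∫ ω, ∑ k ∈ Finset.Icc 1 N, Φ l ω * Φ k ω ∂P ≤ C2 * R ^ 2 := by
      intro l
      rw [integral_finsetSum _ fun k _ => hΦi l k]
      calc ∑ k ∈ Finset.Icc 1 N, ∫ ω, Φ l ω * Φ k ω ∂P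
          ≤ ∑ k ∈ Finset.Icc 1 N, K * R ^ 2 * γ ^ ((k - l) + (l - k)) :=
            Finset.sum_le_sum fun k _ => (le_abs_self _).trans (hcov R hR1 l k)
        _ = K * R ^ 2 * ∑ k ∈ Finset.Icc 1 N, γ ^ ((k - l) + (l - k)) := by rw [Finset.mul_sum]
        _ ≤ K * R ^ 2 * (2 * (1 - γ)⁻¹) :=
            mul_le_mul_of_nonneg_left (sum_geo_dist hγ _ l) (by positivity)
        _ = _ := by simp only [C2]; ring
    have e3 : ∑ l ∈ Finset.Icc 1 N, ∫ ω, ∑ k ∈ Finset.Icc 1 N, Φ l ω * Φ k ω ∂P ≤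
        N * (C2 * R ^ 2) := by
      refine (Finset.sum_le_sum fun l _ => e2 l).trans (le_of_eq ?_)
      simp
    calc _ ≤ ((N : ℝ) ^ 2)⁻¹ * (N * (C2 * R ^ 2)) :=
          mul_le_mul_of_nonneg_left e3 (by positivity)
      _ = C2 * (N : ℝ) ^ (-(1 - 2 * b)) := by
          have : R ^ 2 = (N : ℝ) ^ (2 * b) := by
            rw [hRdef, ← Real.rpow_natCast, ← Real.rpow_mul hN0.le]; congr 1; push_cast; ring
          rw [this, show -(1 - 2 * b) = 2 * b - 1 by ring, Real.rpow_sub hN0, Real.rpow_one]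
          field_simp
      _ ≤ _ := by
          have : (N : ℝ) ^ (-(1 - 2 * b)) ≤ (N : ℝ) ^ (-θ) :=
            Real.rpow_le_rpow_of_exponent_le hN1 (neg_le_neg (min_le_right _ _))
          exact mul_le_mul (by linarith) this (by positivity) (by positivity)

end

/-- Along arithmetic subsequences of step `n₀`: `(1/n) ∑_{l=1}^n Z_{i+l n₀}² → σ²` a.s. -/
theorem convergence_along_arithmetic_subsequences
    {E : Type*} [MeasurableSpace E] [MetricSpace E] [CompleteSpace E]
    [SecondCountableTopology E] [BorelSpace E]
    (π : Kernel E E) [IsMarkovKernel π] (γ c : ℝ) (hγ : γ ∈ Set.Ioo (0 : ℝ) 1) (hc : 0 < c)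
    -- (H0): the Feller property
    (hH0 : ∀ f : E → ℝ, Continuous f → IsBounded (Set.range f) → Continuous (Pfun π f))
    -- (H1): `P` preserves `M_{1,1}`
    (hH1 : ∀ ν : MeasureTheory.Measure E, FiniteFirstMoment ν → FiniteFirstMoment (Pmeas π ν))
    -- (H2): spectral gap in the Wasserstein metric
    (hH2 : ∀ n : ℕ, 1 ≤ n → ∀ ν₁ ν₂ : MeasureTheory.Measure E, FiniteFirstMoment ν₁ →
      FiniteFirstMoment ν₂ →
      wassDist ((Pmeas π)^[n] ν₁) ((Pmeas π)^[n] ν₂) ≤ c * γ ^ n * wassDist ν₁ ν₂)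
    -- the chain: initial distribution `μ ∈ M_{1,1}` and its law `Pμ` on `E^ℕ`
    (μ : MeasureTheory.Measure E) (hμ : FiniteFirstMoment μ)
    (Pμ : MeasureTheory.Measure (ℕ → E)) (hPμ : IsMarkovChainLaw π μ Pμ)
    -- (H3): uniformly bounded moments of order `2 + δ`
    (x₀ : E) (δ : ℝ) (hδ : 0 < δ)
    (hH3int : ∀ n : ℕ, Integrable (fun ω : ℕ → E => dist x₀ (ω n) ^ (2 + δ)) Pμ)
    (hH3 : ∃ M : ℝ, ∀ n : ℕ, ∫ ω : ℕ → E, dist x₀ (ω n) ^ (2 + δ) ∂Pμ ≤ M)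
    -- the unique invariant measure `μ* ∈ M_{1,1}`
    (μstar : MeasureTheory.Measure E) (hμstar : FiniteFirstMoment μstar)
    (hinv : Pmeas π μstar = μstar)
    (huniq : ∀ ν : MeasureTheory.Measure E, IsProbabilityMeasure ν → Pmeas π ν = ν → ν = μstar)
    -- `ψ` is Lipschitz with `⟨ψ, μ*⟩ = 0`
    (ψ : E → ℝ) (Lψ : ℝ≥0) (hψ : LipschitzWith Lψ ψ) (hψ0 : ∫ x, ψ x ∂μstar = 0)
    -- the law of the stationary chain, used to define `σ² = E_{μ*} Z₁²`
    (Pstar : MeasureTheory.Measure (ℕ → E)) (hPstar : IsMarkovChainLaw π μstar Pstar)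
    (n₀ : ℕ) (hn₀ : 2 ≤ n₀) (hγ₀ : c ^ 2 * γ ^ n₀ < 1) :
    ∀ i : ℕ, 1 ≤ i → i ≤ n₀ →
      ∀ᵐ ω ∂Pμ, Tendsto
        (fun n : ℕ => (1 / (n : ℝ)) * ∑ l ∈ Finset.Icc 1 n, (ZFun π ψ (i + l * n₀) ω) ^ 2)
        atTop (𝓝 (∫ ω', (ZFun π ψ 1 ω') ^ 2 ∂Pstar)) := by
  intro i hi hin
  obtain ⟨Lχ, hχ⟩ := chi_lip hγ hc hH1 hH2 hμstar hinv hψ hψ0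
  have hg : ∀ x y x' y', |(chiFun π ψ y - chiFun π ψ x + ψ y) -
      (chiFun π ψ y' - chiFun π ψ x' + ψ y')| ≤
      ((Lχ : ℝ) + Lψ) * (dist x x' + dist y y') := by
    intro x y x' y'
    have h1 := hχ.dist_le_mul y y'
    have h2 := hχ.dist_le_mul x x'
    have h3 := hψ.dist_le_mul y y'
    rw [Real.dist_eq, abs_le] at h1 h2 h3
    have h4 : 0 ≤ (Lψ : ℝ) * dist x x' := by positivity
    rw [abs_le]
    constructor <;> nlinarith
  have key := main_aux hγ hc hH1 hH2 hμ hPμ x₀ (q := 2 + δ) (by linarith) hH3int hH3 hμstar hinv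
    hPstar (g := fun x y => chiFun π ψ y - chiFun π ψ x + ψ y) (by positivity) hg
    (fun l => i - 1 + l * n₀) (fun l k hlk => by
      obtain ⟨d, rfl⟩ := Nat.exists_eq_add_of_lt hlk
      have e : l + d + 1 - l = d + 1 := by omega
      rw [e]
      nlinarith)
  filter_upwards [key] with ω hω
  refine hω.congr fun n => ?_
  rw [div_eq_inv_mul, one_div]
  congr 1
  refine Finset.sum_congr rfl fun l _ => ?_
  have e1 : i - 1 + l * n₀ + 1 = i + l * n₀ := by omega
  have e2 : i + l * n₀ - 1 = i - 1 + l * n₀ := by omega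
  simp only [ZFun, e1, e2]
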